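/- arXiv:0704.0040 — 2 statements merged into one kernel-verified Lean document; each statement's English description precedes it below -/
import Mathlib

section
/- Let 𝔅 be a unital C*-algebra and let 𝔄₁, 𝔄₂ be unital *-algebras, each containing 𝔅 as a *-subalgebra with the same unit, endowed with positive conditional expectations Φ₁ : 𝔄₁ → 𝔅 and Φ₂ : 𝔄₂ → 𝔅. Let a₁,…,a_n ∈ 𝔄₁ and a_{n+1},…,a_{n+m} ∈ 𝔄₂, and let A = (A_{i,j}) ∈ M_{n+m}(𝔅) be the matrix with entries A_{i,j} = Φ₁(a_i* a_j) if i, j ≤ n; A_{i,j} = Φ₁(a_i*)Φ₂(a_j) if i ≤ n < j; A_{i,j} = Φ₂(a_i*)Φ₁(a_j) if j ≤ n < i; and A_{i,j} = Φ₂(a_i* a_j) if i, j > n. Then A is a positive element of the C*-algebra M_{n+m}(𝔅). -/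
open scoped Matrix

/-- A self-adjoint element of a C⋆-algebra with no negative compression `star n * q * n` other than
zero is positive. -/
theorem IsSelfAdjoint.exists_eq_star_mul_self_of_forall_conjugate {C : Type*} [CStarAlgebra C]
    {q : C} (hq : IsSelfAdjoint q)
    (h : ∀ n t : C, star n * q * n = -(star t * t) → t = 0) :
    ∃ t : C, q = star t * t := by
  let _ := CStarAlgebra.spectralOrder C
  have _ := CStarAlgebra.spectralOrderedRing C
  refine CStarAlgebra.nonneg_iff_eq_star_mul_self.mp ?_
  rw [← CFC.negPart_eq_zero_iff q hq]
  obtain ⟨t, ht⟩ := CStarAlgebra.nonneg_iff_eq_star_mul_self.mp (CFC.negPart_nonneg q)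
  have hsa : star q⁻ = q⁻ := (CFC.negPart_nonneg q).isSelfAdjoint
  have hmul : q * q⁻ = -(q⁻ * q⁻) := by
    nth_rw 1 [← CFC.posPart_sub_negPart q hq]
    rw [sub_mul, CFC.posPart_mul_negPart, zero_sub]
  have htn : t * q⁻ = 0 := by
    refine h q⁻ (t * q⁻) ?_
    rw [mul_assoc, hmul, star_mul, mul_assoc, ← mul_assoc (star t) t, ← ht, mul_neg]
  rw [← CStarRing.star_mul_self_eq_zero_iff, hsa]
  nth_rw 1 [ht]
  rw [mul_assoc, htn, mul_zero]

/-- A self-adjoint matrix over a C⋆-algebra whose quadratic form takes nonnegative values is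
positive. -/
theorem Matrix.exists_eq_conjTranspose_mul_self_of_forall_nonneg {B ι : Type*}
    [CStarAlgebra B] [PartialOrder B] [StarOrderedRing B] [Fintype ι] [DecidableEq ι]
    (P : Matrix ι ι B) (hP : Pᴴ = P)
    (h : ∀ b : ι → B, 0 ≤ ∑ i, ∑ k, star (b i) * P i k * b k) :
    ∃ T : Matrix ι ι B, P = Tᴴ * T := by
  refine IsSelfAdjoint.exists_eq_star_mul_self_of_forall_conjugate (C := CStarMatrix ι ι B)
    (q := CStarMatrix.ofMatrix P) hP fun (N : Matrix ι ι B) (T : Matrix ι ι B) hNT => ?_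
  replace hNT : Nᴴ * P * N = -(Tᴴ * T) := hNT
  change T = 0
  ext k j
  have hdiag : ∑ k, star (T k j) * T k j ≤ 0 := by
    have hj := congrFun (congrFun hNT j) j
    simp only [Matrix.mul_apply, Matrix.neg_apply, Matrix.conjTranspose_apply,
      Finset.sum_mul] at hj
    rw [Finset.sum_comm] at hj
    exact neg_nonneg.mp (hj ▸ h fun i => N i j)
  have hk := (Finset.sum_eq_zero_iff_of_nonneg fun k _ => star_mul_self_nonneg (T k j)).mp
    (hdiag.antisymm (Finset.sum_nonneg fun k _ => star_mul_self_nonneg _)) k (Finset.mem_univ k)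
  exact (CStarRing.star_mul_self_eq_zero_iff _).mp hk

section ConditionalExpectation

variable {A B : Type*} [CStarAlgebra B] [Ring A] [Algebra ℂ A] [StarRing A]

/-- A positive linear map on a unital ⋆-algebra is ⋆-preserving. -/
theorem LinearMap.map_star_of_forall_nonneg [PartialOrder B] [StarOrderedRing B]
    [StarModule ℂ A] (Φ : A →ₗ[ℂ] B) (hpos : ∀ a, 0 ≤ Φ (star a * a)) (a : A) :
    Φ (star a) = star (Φ a) := by
  have hsa (c : A) : star (Φ (star c * c)) = Φ (star c * c) := (hpos c).isSelfAdjoint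
  have h1 : star (Φ 1) = Φ 1 := by simpa using hsa 1
  have h2 := hsa (1 + a)
  have h3 := hsa (1 + Complex.I • a)
  have e2 : star (1 + a) * (1 + a) = 1 + star a + a + star a * a := by
    rw [star_add, star_one]
    noncomm_ring
  have e3 : star (1 + Complex.I • a) * (1 + Complex.I • a) =
      1 - Complex.I • star a + Complex.I • a + star a * a := by
    simp only [star_add, star_one, star_smul, Complex.star_def, Complex.conj_I, add_mul, mul_add,
      one_mul, mul_one, smul_mul_smul_comm, neg_mul, Complex.I_mul_I, neg_neg, one_smul, neg_smul]
    abel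
  rw [e2] at h2
  rw [e3] at h3
  simp only [map_add, map_sub, map_smul, star_add, star_sub, star_smul, Complex.star_def,
    Complex.conj_I, neg_smul, h1, hsa a] at h2 h3
  have h4 : star (Φ (star a)) - Φ a = Φ (star a) - star (Φ a) := by
    linear_combination (norm := module) h2
  have h5 : Complex.I • (star (Φ (star a)) - Φ a) = Complex.I • (star (Φ a) - Φ (star a)) := by
    linear_combination (norm := module) h3
  have h6 : (2 : ℂ) • Φ (star a) = (2 : ℂ) • star (Φ a) := by
    linear_combination (norm := module) smul_right_injective B Complex.I_ne_zero h5 - h4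
  exact smul_right_injective B two_ne_zero h6

/-- The Kadison–Schwarz inequality for conditional expectations. -/
theorem LinearMap.star_mul_self_le_of_bimodule [PartialOrder B] [StarOrderedRing B]
    [StarModule ℂ A] (ι : B →⋆ₐ[ℂ] A) (Φ : A →ₗ[ℂ] B)
    (hbimod : ∀ (b b' : B) (a : A), Φ (ι b * a * ι b') = b * Φ a * b')
    (hid : ∀ b : B, Φ (ι b) = b) (hpos : ∀ a, 0 ≤ Φ (star a * a)) (a : A) :
    star (Φ a) * Φ a ≤ Φ (star a * a) := by
  have h := hpos (a - ι (Φ a))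
  have hl := hbimod (star (Φ a)) 1 a
  have hr := hbimod 1 (Φ a) (star a)
  simp only [map_one, mul_one, one_mul] at hl hr
  simp only [star_sub, sub_mul, mul_sub, map_sub, ← map_star, ← map_mul, hid, hl, hr] at h
  rw [Φ.map_star_of_forall_nonneg hpos, sub_self, sub_zero] at h
  exact sub_nonneg.mp h

variable {κ : Type*} [Fintype κ]

theorem LinearMap.sum_map_mul_of_bimodule (ι : B →⋆ₐ[ℂ] A) (Φ : A →ₗ[ℂ] B)
    (hbimod : ∀ (b b' : B) (a : A), Φ (ι b * a * ι b') = b * Φ a * b')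
    (x : κ → A) (b : κ → B) :
    ∑ k, Φ (x k) * b k = Φ (∑ k, x k * ι (b k)) := by
  rw [map_sum]
  refine Finset.sum_congr rfl fun k _ => ?_
  simpa using (hbimod 1 (b k) (x k)).symm

theorem LinearMap.sum_star_mul_map_mul_of_bimodule (ι : B →⋆ₐ[ℂ] A) (Φ : A →ₗ[ℂ] B)
    (hbimod : ∀ (b b' : B) (a : A), Φ (ι b * a * ι b') = b * Φ a * b')
    (x : κ → A) (b : κ → B) :
    ∑ i, ∑ k, star (b i) * Φ (star (x i) * x k) * b k =
      Φ (star (∑ k, x k * ι (b k)) * ∑ k, x k * ι (b k)) := by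
  simp only [star_sum, Finset.sum_mul_sum, map_sum, star_mul, ← map_star]
  refine Finset.sum_congr rfl fun i _ => Finset.sum_congr rfl fun k _ => ?_
  rw [← hbimod]
  simp only [mul_assoc]

end ConditionalExpectation

theorem Finset.sum_sum_star_mul_mul_mul {R κ μ : Type*} [NonUnitalSemiring R] [StarRing R]
    [Fintype κ] [Fintype μ] (p b : κ → R) (q c : μ → R) :
    ∑ i, ∑ k, star (b i) * (star (p i) * q k) * c k =
      star (∑ i, p i * b i) * ∑ k, q k * c k := by
  simp only [star_sum, Finset.sum_mul_sum, star_mul, mul_assoc]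

/-!
STATEMENT 0: Let `𝔅` be a unital C*-algebra, `𝔄₁, 𝔄₂` unital *-algebras containing `𝔅`
as a *-subalgebra (via unital *-algebra embeddings `ι₁, ι₂`), with positive conditional
expectations `Φ₁ : 𝔄₁ → 𝔅`, `Φ₂ : 𝔄₂ → 𝔅`.  For `a₁,…,aₙ ∈ 𝔄₁` and
`a_{n+1},…,a_{n+m} ∈ 𝔄₂`, the matrix `A ∈ M_{n+m}(𝔅)` with entries
`Φ₁(aᵢ*aⱼ)` (`i,j ≤ n`), `Φ₁(aᵢ*)Φ₂(aⱼ)` (`i ≤ n < j`), `Φ₂(aᵢ*)Φ₁(aⱼ)` (`j ≤ n < i`),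
`Φ₂(aᵢ*aⱼ)` (`i,j > n`) is a positive element of the C*-algebra `M_{n+m}(𝔅)`.

Positivity of the matrix is expressed by the (equivalent) standard characterization of
positive elements of the C*-algebra `M_{n+m}(𝔅)`: `A = Tᴴ T` for some matrix `T`.
The index set `{1,…,n+m}` is encoded as `Fin n ⊕ Fin m`.
-/

theorem stmt_0 {B A1 A2 : Type*}
    [CStarAlgebra B] [PartialOrder B] [StarOrderedRing B]
    [Ring A1] [Algebra ℂ A1] [StarRing A1] [StarModule ℂ A1]
    [Ring A2] [Algebra ℂ A2] [StarRing A2] [StarModule ℂ A2]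
    (ι1 : B →⋆ₐ[ℂ] A1) (ι2 : B →⋆ₐ[ℂ] A2)
    (hι1 : Function.Injective ι1) (hι2 : Function.Injective ι2)
    (Φ1 : A1 →ₗ[ℂ] B) (Φ2 : A2 →ₗ[ℂ] B)
    -- `Φ₁` is a conditional expectation:
    (hΦ1bimod : ∀ (b b' : B) (a : A1), Φ1 (ι1 b * a * ι1 b') = b * Φ1 a * b')
    (hΦ1id : ∀ b : B, Φ1 (ι1 b) = b)
    -- `Φ₁` is positive:
    (hΦ1pos : ∀ a : A1, 0 ≤ Φ1 (star a * a))
    -- `Φ₂` is a positive conditional expectation: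
    (hΦ2bimod : ∀ (b b' : B) (a : A2), Φ2 (ι2 b * a * ι2 b') = b * Φ2 a * b')
    (hΦ2id : ∀ b : B, Φ2 (ι2 b) = b)
    (hΦ2pos : ∀ a : A2, 0 ≤ Φ2 (star a * a))
    (n m : ℕ) (x : Fin n → A1) (y : Fin m → A2) :
    ∃ T : Matrix (Fin n ⊕ Fin m) (Fin n ⊕ Fin m) B,
      (Matrix.of fun i j =>
        match i, j with
        | Sum.inl i, Sum.inl j => Φ1 (star (x i) * x j)
        | Sum.inl i, Sum.inr j => Φ1 (star (x i)) * Φ2 (y j)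
        | Sum.inr i, Sum.inl j => Φ2 (star (y i)) * Φ1 (x j)
        | Sum.inr i, Sum.inr j => Φ2 (star (y i) * y j)) = Tᴴ * T := by
  have hs1 := Φ1.map_star_of_forall_nonneg hΦ1pos
  have hs2 := Φ2.map_star_of_forall_nonneg hΦ2pos
  refine Matrix.exists_eq_conjTranspose_mul_self_of_forall_nonneg _ ?_ fun b => ?_
  · ext (i | i) (j | j) <;> simp [← hs1, ← hs2]
  · simp only [Fintype.sum_sum_type, Matrix.of_apply, Finset.sum_add_distrib, hs1, hs2,
      Finset.sum_sum_star_mul_mul_mul, Φ1.sum_star_mul_map_mul_of_bimodule ι1 hΦ1bimod,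
      Φ2.sum_star_mul_map_mul_of_bimodule ι2 hΦ2bimod, Φ1.sum_map_mul_of_bimodule ι1 hΦ1bimod,
      Φ2.sum_map_mul_of_bimodule ι2 hΦ2bimod]
    set X := ∑ k, x k * ι1 (b (Sum.inl k))
    set Y := ∑ k, y k * ι2 (b (Sum.inr k))
    have hX := sub_nonneg.mpr (Φ1.star_mul_self_le_of_bimodule ι1 hΦ1bimod hΦ1id hΦ1pos X)
    have hY := sub_nonneg.mpr (Φ2.star_mul_self_le_of_bimodule ι2 hΦ2bimod hΦ2id hΦ2pos Y)
    convert add_nonneg (add_nonneg hX hY) (star_mul_self_nonneg (Φ1 X + Φ2 Y)) using 1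
    rw [star_add, add_mul, mul_add, mul_add]
    abel
end

section
/- Let 𝔄₁ and 𝔄₂ be *-subalgebras of 𝔄, each containing 𝔅, which are c-free with respect to (Φ, Ψ), and suppose that the restrictions of Φ to 𝔄₁ and to 𝔄₂ and the restrictions of Ψ to 𝔄₁ and to 𝔄₂ are positive. Then for every element a of the *-subalgebra of 𝔄 generated by 𝔄₁ ∪ 𝔄₂ one has Φ(a*a) ≥ 0 in 𝔅 and Ψ(a*a) ≥ 0 in 𝔇. -/
/-!
STATEMENT 1: Let `𝔅` be a unital C*-algebra, `𝔇` a C*-subalgebra of `𝔅` containing its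
unit, and `𝔄` a unital complex *-algebra containing `𝔅` (via a unital *-algebra embedding
`ι`), endowed with conditional expectations `Φ : 𝔄 → 𝔅` and `Ψ : 𝔄 → 𝔇`.  If `𝔄₁, 𝔄₂`
are *-subalgebras of `𝔄` containing `𝔅` which are c-free with respect to `(Φ, Ψ)`, and
the restrictions of `Φ` and `Ψ` to `𝔄₁` and to `𝔄₂` are positive, then `Φ(a*a) ≥ 0`
and `Ψ(a*a) ≥ 0` for every `a` in the *-subalgebra generated by `𝔄₁ ∪ 𝔄₂`.
-/

/-- The family `S` of *-subalgebras of `A` is conditionally free (c-free) with respect to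
`(Φ, Ψ)`: for every `n ≥ 1`, every tuple `a₁, …, aₙ` with `aⱼ ∈ S (ε j)`,
`ε(1) ≠ ε(2) ≠ … ≠ ε(n)` (adjacent indices distinct) and `Ψ(aⱼ) = 0`, one has
`Ψ(a₁⋯aₙ) = 0` and `Φ(a₁⋯aₙ) = Φ(a₁)⋯Φ(aₙ)`. -/
def IsCFreeFamily {B A I : Type*} [Ring B] [Algebra ℂ B] [Ring A] [Algebra ℂ A]
    [StarRing A] [StarModule ℂ A]
    (Φ Ψ : A →ₗ[ℂ] B) (S : I → StarSubalgebra ℂ A) : Prop :=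
  ∀ (m : ℕ) (ε : Fin (m + 1) → I), (∀ i : Fin m, ε i.castSucc ≠ ε i.succ) →
    ∀ a : Fin (m + 1) → A, (∀ j, a j ∈ S (ε j)) → (∀ j, Ψ (a j) = 0) →
      Ψ (List.ofFn a).prod = 0 ∧
      Φ (List.ofFn a).prod = (List.ofFn fun j => Φ (a j)).prod

theorem IsSelfAdjoint.exists_conj_eq_neg_star_mul_self {E : Type*} [CStarAlgebra E] {a : E}
    (ha : IsSelfAdjoint a) :
    ∃ t r : E, star t * a * t = -(star r * r) ∧ (r = 0 → ∃ s, a = star s * s) := by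
  let t : ℝ → ℝ := fun x ↦ max (-x) 0
  let r : ℝ → ℝ := fun x ↦ t x * √(t x)
  let s : ℝ → ℝ := fun x ↦ √(max x 0)
  have ht : Continuous t := by fun_prop
  have hr : Continuous r := by fun_prop
  have hs : Continuous s := by fun_prop
  have hid : cfc (fun x : ℝ ↦ x) a = a := cfc_id' ℝ a
  have hts : star (cfc t a) = cfc t a := cfc_predicate t a
  have hrs : star (cfc r a) = cfc r a := cfc_predicate r a
  have hss : star (cfc s a) = cfc s a := cfc_predicate s a
  refine ⟨cfc t a, cfc r a, ?_, fun h0 ↦ ⟨cfc s a, ?_⟩⟩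
  · have h1 : cfc t a * a * cfc t a = cfc (fun x ↦ t x * x * t x) a := by
      rw [cfc_mul _ _ a, cfc_mul _ _ a, hid]
    rw [hts, hrs, h1, ← cfc_mul r r a, ← cfc_neg]
    refine cfc_congr fun x _ ↦ ?_
    simp only [r, t]
    rcases le_total x 0 with hx | hx
    · have h2 : max (-x) 0 = -x := max_eq_left (by linarith)
      have := Real.mul_self_sqrt (show 0 ≤ -x by linarith)
      rw [h2]
      linear_combination (x ^ 2) * this
    · have h2 : max (-x) 0 = 0 := max_eq_right (by linarith)
      simp [h2]
  · have hnn : ∀ x ∈ spectrum ℝ a, 0 ≤ x := fun x hx ↦ by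
      by_contra! hneg
      have h1 := (cfc_eq_cfc_iff_eqOn (R := ℝ) (f := r) (g := fun _ ↦ 0) (a := a)).1
        (by rw [cfc_const_zero]; exact h0) hx
      have h2 : t x = -x := max_eq_left (by linarith)
      have h3 : 0 < -x := by linarith
      have : 0 < r x := by simp only [r, h2]; positivity
      exact this.ne' h1
    rw [hss, ← cfc_mul s s a]
    conv_lhs => rw [← hid]
    refine cfc_congr fun x hx ↦ ?_
    simp [s, hnn x hx]

/-- A hermitian matrix over a C⋆-algebra whose quadratic form is positive after an injective
⋆-homomorphism is of the form `Q⋆ Q`. -/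
theorem CStarMatrix.exists_star_mul_self_of_quadratic_nonneg {C B : Type*} [CStarAlgebra C]
    [CStarAlgebra B]
    [PartialOrder B] [StarOrderedRing B] (f : C →⋆ₐ[ℂ] B) (hf : Function.Injective f)
    {n : Type*} [Fintype n] (P : n → n → C) (hP : ∀ i j, star (P i j) = P j i)
    (hpos : ∀ d : n → C, 0 ≤ f (∑ i, ∑ j, star (d i) * P i j * d j)) :
    ∃ Q : n → n → C, ∀ i j, P i j = ∑ k, star (Q k i) * Q k j := by
  classical
  let : PartialOrder C := CStarAlgebra.spectralOrder C
  have : StarOrderedRing C := CStarAlgebra.spectralOrderedRing C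
  let M : CStarMatrix n n C := CStarMatrix.ofMatrix P
  have hM : IsSelfAdjoint M := by
    ext i j
    exact hP j i
  obtain ⟨T, R, key, hR⟩ := hM.exists_conj_eq_neg_star_mul_self
  have hR0 : R = 0 := by
    ext k j
    have h1 := hpos fun i ↦ T i j
    have h2 : ∑ i, ∑ k, star (T i j) * P i k * T k j = - ∑ k, star (R k j) * R k j := by
      have h3 := congrFun (congrFun key j) j
      simp only [CStarMatrix.mul_apply, CStarMatrix.neg_apply, CStarMatrix.star_apply] at h3
      rw [← h3, Finset.sum_comm]
      simp only [Finset.sum_mul]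
      rfl
    rw [h2, map_neg, map_sum, neg_nonneg] at h1
    have h4 : ∀ k ∈ Finset.univ, 0 ≤ f (star (R k j) * R k j) := fun k _ ↦ by
      rw [map_mul, map_star]; exact star_mul_self_nonneg _
    have h5 := (Finset.sum_eq_zero_iff_of_nonneg h4).1
      (le_antisymm h1 (Finset.sum_nonneg h4)) k (Finset.mem_univ k)
    rw [map_mul, map_star, CStarRing.star_mul_self_eq_zero_iff] at h5
    exact hf (h5.trans (map_zero f).symm)
  obtain ⟨S, hS⟩ := hR hR0
  refine ⟨fun i j ↦ S i j, fun i j ↦ ?_⟩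
  have h3 := congrFun (congrFun hS i) j
  simp only [CStarMatrix.mul_apply, CStarMatrix.star_apply] at h3
  exact h3

theorem StarSubalgebra.exists_star_mul_self_of_quadratic_nonneg {B : Type*} [CStarAlgebra B]
    [PartialOrder B] [StarOrderedRing B] (D : StarSubalgebra ℂ B) (hD : IsClosed (D : Set B))
    {n : Type*} [Fintype n] (P : n → n → B) (hPD : ∀ i j, P i j ∈ D)
    (hP : ∀ i j, star (P i j) = P j i)
    (hpos : ∀ d : n → B, (∀ i, d i ∈ D) → 0 ≤ ∑ i, ∑ j, star (d i) * P i j * d j) :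
    ∃ Q : n → n → B, (∀ i j, Q i j ∈ D) ∧ ∀ i j, P i j = ∑ k, star (Q k i) * Q k j := by
  have := hD
  obtain ⟨Q, hQ⟩ := CStarMatrix.exists_star_mul_self_of_quadratic_nonneg D.subtype
    Subtype.val_injective (fun i j ↦ (⟨P i j, hPD i j⟩ : D))
    (fun i j ↦ Subtype.ext (hP i j))
    (fun d ↦ by simpa using hpos (fun i ↦ (d i : B)) (fun i ↦ (d i).2))
  refine ⟨fun i j ↦ (Q i j : B), fun i j ↦ (Q i j).2, fun i j ↦ ?_⟩
  simpa using congrArg (Subtype.val) (hQ i j)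

/-- A linear map which is positive on a *-subalgebra is hermitian there. -/
theorem StarSubalgebra.map_star_of_nonneg {A B : Type*} [CStarAlgebra B]
    [PartialOrder B] [StarOrderedRing B]
    [Ring A] [Algebra ℂ A] [StarRing A] [StarModule ℂ A] (S : StarSubalgebra ℂ A)
    (φ : A →ₗ[ℂ] B) (h : ∀ a ∈ S, 0 ≤ φ (star a * a)) {x : A} (hx : x ∈ S) :
    φ (star x) = star (φ x) := by
  have sa : ∀ a ∈ S, star (φ (star a * a)) = φ (star a * a) := fun a ha ↦
    (IsSelfAdjoint.of_nonneg (h a ha)).star_eq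
  have h1 : star (φ 1) = φ 1 := by simpa using sa 1 (one_mem S)
  have key : ∀ y ∈ S, star (φ y) + star (φ (star y)) = φ y + φ (star y) := fun y hy ↦ by
    have h2 := sa (1 + y) (add_mem (one_mem S) hy)
    have h3 := sa y hy
    simp only [star_add, star_one, add_mul, mul_add, one_mul, mul_one, map_add, h1, h3] at h2
    linear_combination (norm := module) h2
  have e1 := key x hx
  have e2 := key (Complex.I • x) (S.smul_mem hx _)
  simp only [star_smul, map_smul, Complex.star_def, Complex.conj_I, map_neg, neg_neg] at e2
  have e3 := congrArg (fun t ↦ Complex.I • t) e2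
  simp only [smul_add, smul_smul, Complex.I_mul_I, neg_smul, smul_neg] at e3
  have e4 : (2 : ℂ) • φ (star x) = (2 : ℂ) • star (φ x) := by
    linear_combination (norm := module) -e3 - e1
  exact smul_right_injective B (two_ne_zero (α := ℂ)) e4

/-- Alternating words with letters in the kernel of `Ψ`, whose first letter, if there is one,
belongs to `S i`. -/
inductive CenteredWord {A B : Type*} [Ring A] [Algebra ℂ A] [StarRing A] [StarModule ℂ A]
    [Ring B] [Algebra ℂ B] (Ψ : A →ₗ[ℂ] B) (S : Bool → StarSubalgebra ℂ A) :
    Bool → List A → Prop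
  | nil (i : Bool) : CenteredWord Ψ S i []
  | cons {i : Bool} {x : A} {l : List A} (hx : x ∈ S i) (hx0 : Ψ x = 0)
      (hl : CenteredWord Ψ S (!i) l) : CenteredWord Ψ S i (x :: l)

namespace CenteredWord

variable {A B : Type*} [Ring A] [Algebra ℂ A] [StarRing A] [StarModule ℂ A]
  [Ring B] [Algebra ℂ B] {Φ Ψ : A →ₗ[ℂ] B} {S : Bool → StarSubalgebra ℂ A}

theorem getElem_mem {i : Bool} {l : List A} (h : CenteredWord Ψ S i l) :
    ∀ (j : ℕ) (hj : j < l.length), l[j] ∈ S (i ^^ j.bodd) ∧ Ψ l[j] = 0 := by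
  induction h with
  | nil => intro j hj; simp at hj
  | cons hx hx0 _ ih =>
    intro j hj
    cases j with
    | zero => simpa using ⟨hx, hx0⟩
    | succ j => simpa using ih j (by simpa using hj)

theorem map_prod (hfree : IsCFreeFamily Φ Ψ S) {i : Bool} {l : List A}
    (h : CenteredWord Ψ S i l) (hl : l ≠ []) :
    Ψ l.prod = 0 ∧ Φ l.prod = (l.map Φ).prod := by
  obtain ⟨m, hm⟩ := Nat.exists_eq_succ_of_ne_zero (mt List.length_eq_zero_iff.1 hl)
  have key := hfree m (fun j ↦ i ^^ j.1.bodd) (fun j ↦ by simp)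
    (fun j ↦ l[j.1]'(by omega)) (fun j ↦ (h.getElem_mem _ _).1) (fun j ↦ (h.getElem_mem _ _).2)
  have e1 : (List.ofFn fun j : Fin (m + 1) ↦ l[j.1]'(by omega)) = l :=
    List.ext_getElem (by simp [hm]) (by simp [-List.ofFn_succ])
  have e2 : (List.ofFn fun j : Fin (m + 1) ↦ Φ (l[j.1]'(by omega))) = l.map Φ :=
    List.ext_getElem (by simp [hm]) (by simp [-List.ofFn_succ])
  rwa [e1, e2] at key

theorem reverse_star_append (hstar : ∀ i, ∀ x ∈ S i, Ψ x = 0 → Ψ (star x) = 0) {i : Bool}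
    {l₁ : List A} (h₁ : CenteredWord Ψ S i l₁) :
    ∀ {l₂ : List A}, CenteredWord Ψ S (!i) l₂ →
      ∃ k, CenteredWord Ψ S k ((l₁.map star).reverse ++ l₂) := by
  induction h₁ with
  | nil i => exact fun h₂ ↦ ⟨_, by simpa using h₂⟩
  | cons hx hx0 _ ih =>
    intro l₂ h₂
    rw [Bool.not_not] at ih
    simpa using ih (CenteredWord.cons (star_mem hx) (hstar _ _ hx hx0) h₂)

end CenteredWord

theorem star_list_prod_eq {A : Type*} [Ring A] [StarRing A] (l : List A) :
    star l.prod = ((l.map star).reverse).prod := by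
  induction l with
  | nil => simp
  | cons x l ih => simp [ih]

/-- Two *-subalgebras `S true`, `S false` containing `ι B` which are c-free with respect to the
conditional expectations `Φ` and `Ψ`, both positive on each of the two subalgebras. -/
structure CFreePositive {A B : Type*} [CStarAlgebra B] [PartialOrder B]
    [Ring A] [Algebra ℂ A] [StarRing A] [StarModule ℂ A] (ι : B →⋆ₐ[ℂ] A)
    (D : StarSubalgebra ℂ B) (Φ Ψ : A →ₗ[ℂ] B) (S : Bool → StarSubalgebra ℂ A) : Prop where
  isClosed : IsClosed (D : Set B)
  map_bimod : ∀ (b b' : B) (a : A), Φ (ι b * a * ι b') = b * Φ a * b'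
  map_incl : ∀ b : B, Φ (ι b) = b
  mem : ∀ a : A, Ψ a ∈ D
  map_bimod' : ∀ d d' : B, d ∈ D → d' ∈ D → ∀ a : A, Ψ (ι d * a * ι d') = d * Ψ a * d'
  map_incl' : ∀ d : B, d ∈ D → Ψ (ι d) = d
  incl_mem : ∀ i b, ι b ∈ S i
  free : IsCFreeFamily Φ Ψ S
  nonneg : ∀ i, ∀ a ∈ S i, 0 ≤ Φ (star a * a)
  nonneg' : ∀ i, ∀ a ∈ S i, 0 ≤ Ψ (star a * a)

/-- The span of the centered alternating words of length at most `n` starting in `S i`, together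
with `D`. -/
def centeredSpan {A B : Type*} [CStarAlgebra B]
    [Ring A] [Algebra ℂ A] [StarRing A] [StarModule ℂ A] (ι : B →⋆ₐ[ℂ] A)
    (D : StarSubalgebra ℂ B) (Ψ : A →ₗ[ℂ] B) (S : Bool → StarSubalgebra ℂ A)
    (n : ℕ) (i : Bool) : Submodule ℂ A :=
  Submodule.span ℂ {a | ∃ d ∈ D, ∃ l, CenteredWord Ψ S i l ∧ l.length ≤ n ∧ a = ι d * l.prod}

section centeredSpan

variable {A B : Type*} [CStarAlgebra B] [Ring A] [Algebra ℂ A] [StarRing A] [StarModule ℂ A]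
  {ι : B →⋆ₐ[ℂ] A} {D : StarSubalgebra ℂ B} {Ψ : A →ₗ[ℂ] B} {S : Bool → StarSubalgebra ℂ A}

theorem mul_mem_centeredSpan {n : ℕ} {i : Bool} {d : B} (hd : d ∈ D) {u : A}
    (hu : u ∈ centeredSpan ι D Ψ S n i) : ι d * u ∈ centeredSpan ι D Ψ S n i := by
  induction hu using Submodule.span_induction with
  | mem u hu =>
    obtain ⟨d', hd', l, hl, hn, rfl⟩ := hu
    exact Submodule.subset_span ⟨d * d', mul_mem hd hd', l, hl, hn, by rw [map_mul, mul_assoc]⟩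
  | zero => simp
  | add u v _ _ h₁ h₂ => rw [mul_add]; exact add_mem h₁ h₂
  | smul c u _ h => rw [mul_smul_comm]; exact Submodule.smul_mem _ _ h

theorem centeredSpan_mono {n m : ℕ} (h : n ≤ m) (i : Bool) :
    centeredSpan ι D Ψ S n i ≤ centeredSpan ι D Ψ S m i :=
  Submodule.span_mono fun _ ⟨d, hd, l, hl, hn, e⟩ ↦ ⟨d, hd, l, hl, hn.trans h, e⟩

theorem CenteredWord.prod_mem_iSup {i : Bool} {l : List A} (hl : CenteredWord Ψ S i l) {d : B}
    (hd : d ∈ D) : ι d * l.prod ∈ ⨆ p : ℕ × Bool, centeredSpan ι D Ψ S p.1 p.2 :=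
  Submodule.mem_iSup_of_mem (l.length, i) (Submodule.subset_span ⟨d, hd, l, hl, le_rfl, rfl⟩)

end centeredSpan

namespace CFreePositive

variable {A B : Type*} [CStarAlgebra B] [PartialOrder B]
  [Ring A] [Algebra ℂ A] [StarRing A] [StarModule ℂ A] {ι : B →⋆ₐ[ℂ] A}
  {D : StarSubalgebra ℂ B} {Φ Ψ : A →ₗ[ℂ] B} {S : Bool → StarSubalgebra ℂ A}

theorem map_left (H : CFreePositive ι D Φ Ψ S) (b : B) (a : A) : Φ (ι b * a) = b * Φ a := by
  simpa using H.map_bimod b 1 a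

theorem map_right (H : CFreePositive ι D Φ Ψ S) (b : B) (a : A) : Φ (a * ι b) = Φ a * b := by
  simpa using H.map_bimod 1 b a

theorem map_left' (H : CFreePositive ι D Φ Ψ S) {d : B} (hd : d ∈ D) (a : A) :
    Ψ (ι d * a) = d * Ψ a := by
  simpa using H.map_bimod' d 1 hd (one_mem D) a

theorem map_right' (H : CFreePositive ι D Φ Ψ S) {d : B} (hd : d ∈ D) (a : A) :
    Ψ (a * ι d) = Ψ a * d := by
  simpa using H.map_bimod' 1 d (one_mem D) hd a

theorem map_word (H : CFreePositive ι D Φ Ψ S) {i : Bool} {l : List A}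
    (hl : CenteredWord Ψ S i l) : Φ l.prod = (l.map Φ).prod := by
  rcases eq_or_ne l [] with rfl | h
  · simpa using H.map_incl 1
  · exact (hl.map_prod H.free h).2

theorem exists_of_mem_centeredSpan (H : CFreePositive ι D Φ Ψ S) {n : ℕ} {i : Bool} {u : A}
    (hu : u ∈ centeredSpan ι D Ψ S n i) :
    ∃ d ∈ D, ∃ (N : ℕ) (x w : Fin N → A), (∀ j, x j ∈ S i) ∧ (∀ j, Ψ (x j) = 0) ∧
      (∀ j, w j ∈ centeredSpan ι D Ψ S (n - 1) (!i)) ∧ u = ι d + ∑ j, x j * w j := by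
  let T : Set A := {a | ∃ x w, x ∈ S i ∧ Ψ x = 0 ∧
    w ∈ centeredSpan ι D Ψ S (n - 1) (!i) ∧ a = x * w}
  have hle : centeredSpan ι D Ψ S n i ≤
      (Subalgebra.toSubmodule D.toSubalgebra).map ι.toAlgHom.toLinearMap ⊔
        Submodule.span ℂ T := by
    refine Submodule.span_le.2 ?_
    rintro _ ⟨d, hd, l, hl, hn, rfl⟩
    cases hl with
    | nil => exact Submodule.mem_sup_left ⟨d, hd, by simp⟩
    | @cons _ x l hx hx0 hl =>
      refine Submodule.mem_sup_right (Submodule.subset_span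
        ⟨ι d * x, l.prod, mul_mem (H.incl_mem i d) hx, by rw [H.map_left' hd, hx0, mul_zero],
          Submodule.subset_span ⟨1, one_mem D, l, hl, ?_, by simp⟩, by simp [mul_assoc]⟩)
      simp at hn; omega
  obtain ⟨_, ⟨d, hd, rfl⟩, v, hv, rfl⟩ := Submodule.mem_sup.1 (hle hu)
  obtain ⟨N, c, g, rfl⟩ := Submodule.mem_span_set'.1 hv
  choose x w hx hx0 hw he using fun j ↦ (g j).2
  refine ⟨d, hd, N, fun j ↦ c j • x j, w, fun j ↦ (S i).smul_mem (hx j) _,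
    fun j ↦ by simp [hx0], hw, ?_⟩
  simp [he]

variable [StarOrderedRing B]

theorem map_star_of_mem (H : CFreePositive ι D Φ Ψ S) {i : Bool} {x : A} (hx : x ∈ S i) :
    Φ (star x) = star (Φ x) :=
  (S i).map_star_of_nonneg Φ (H.nonneg i) hx

theorem map_star_of_mem' (H : CFreePositive ι D Φ Ψ S) {i : Bool} {x : A} (hx : x ∈ S i) :
    Ψ (star x) = star (Ψ x) :=
  (S i).map_star_of_nonneg Ψ (H.nonneg' i) hx

theorem map_star_eq_zero (H : CFreePositive ι D Φ Ψ S) (i : Bool) (x : A) (hx : x ∈ S i)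
    (h : Ψ x = 0) : Ψ (star x) = 0 := by
  rw [H.map_star_of_mem' hx, h, star_zero]

theorem map_reverse_star (H : CFreePositive ι D Φ Ψ S) {i : Bool} {l : List A}
    (hl : CenteredWord Ψ S i l) :
    (((l.map star).reverse).map Φ).prod = star (l.map Φ).prod := by
  induction hl with
  | nil => simp
  | cons hx _ _ ih => simp [← ih, H.map_star_of_mem hx]

theorem map_star_mul_mul (H : CFreePositive ι D Φ Ψ S) {n m : ℕ} {i : Bool} {u c v : A}
    (hc : c ∈ S i) (hc0 : Ψ c = 0) (hu : u ∈ centeredSpan ι D Ψ S n (!i))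
    (hv : v ∈ centeredSpan ι D Ψ S m (!i)) :
    Ψ (star u * c * v) = 0 ∧ Φ (star u * c * v) = star (Φ u) * Φ c * Φ v := by
  induction hu using Submodule.span_induction with
  | zero => simp
  | add u u' _ _ h h' => simp [add_mul, h, h']
  | smul r u _ h => simp [h]
  | mem u hu =>
    induction hv using Submodule.span_induction with
    | zero => simp
    | add v v' _ _ h h' => simp [mul_add, h, h']
    | smul r v _ h => simp [h]
    | mem v hv =>
      obtain ⟨d, hd, l, hl, -, rfl⟩ := hu
      obtain ⟨d', hd', l', hl', -, rfl⟩ := hv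
      have hc' : star (ι d) * c * ι d' ∈ S i :=
        mul_mem (mul_mem (star_mem (H.incl_mem i d)) hc) (H.incl_mem i d')
      have hcΨ : Ψ (star (ι d) * c * ι d') = 0 := by
        rw [← map_star, H.map_bimod' _ _ (star_mem hd) hd', hc0, mul_zero, zero_mul]
      have hcΦ : Φ (star (ι d) * c * ι d') = star d * Φ c * d' := by
        rw [← map_star, H.map_bimod]
      obtain ⟨k, hk⟩ := hl.reverse_star_append H.map_star_eq_zero
        (CenteredWord.cons (by rwa [Bool.not_not]) hcΨ (by rwa [Bool.not_not]))
      have e : star (ι d * l.prod) * c * (ι d' * l'.prod) =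
          ((l.map star).reverse ++ (star (ι d) * c * ι d') :: l').prod := by
        simp [star_list_prod_eq, mul_assoc]
      have hz := hk.map_prod H.free (by simp)
      rw [e, hz.1, hz.2, H.map_left, H.map_left, H.map_word hl, H.map_word hl']
      refine ⟨rfl, ?_⟩
      rw [List.map_append, List.prod_append, H.map_reverse_star hl, List.map_cons,
        List.prod_cons, hcΦ]
      simp [mul_assoc]

/-- The Schwarz inequality for `Φ` on `S i`. -/
theorem schwarz (H : CFreePositive ι D Φ Ψ S) {i : Bool} {y : A} (hy : y ∈ S i) :
    star (Φ y) * Φ y ≤ Φ (star y * y) := by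
  have h := H.nonneg i (y - ι (Φ y)) (sub_mem hy (H.incl_mem i _))
  have e : Φ (star (y - ι (Φ y)) * (y - ι (Φ y))) = Φ (star y * y) - star (Φ y) * Φ y := by
    rw [star_sub, ← map_star, sub_mul, mul_sub, mul_sub, ← map_mul]
    simp only [map_sub, H.map_left, H.map_right, H.map_incl, H.map_star_of_mem hy]
    abel
  rwa [e, sub_nonneg] at h

/-- Stripping the first letters: `Ψ` is positive at a sum of products `x j * w j`, and `Φ` does not
increase when each `w j` is replaced by its expectation. -/
theorem nonneg_and_le_sum_mul (H : CFreePositive ι D Φ Ψ S) {n N : ℕ} {i : Bool}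
    (ih : ∀ v ∈ centeredSpan ι D Ψ S n (!i),
      0 ≤ Ψ (star v * v) ∧ star (Φ v) * Φ v ≤ Φ (star v * v))
    {x w : Fin N → A} (hx : ∀ j, x j ∈ S i)
    (hw : ∀ j, w j ∈ centeredSpan ι D Ψ S n (!i)) :
    0 ≤ Ψ (star (∑ j, x j * w j) * ∑ j, x j * w j) ∧
      Φ (star (∑ j, x j * ι (Φ (w j))) * ∑ j, x j * ι (Φ (w j))) ≤
        Φ (star (∑ j, x j * w j) * ∑ j, x j * w j) := by
  have hxx : ∀ j k, star (x j) * x k ∈ S i := fun j k ↦ mul_mem (star_mem (hx j)) (hx k)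
  obtain ⟨Q, hQD, hQ⟩ := D.exists_star_mul_self_of_quadratic_nonneg H.isClosed
    (fun j k ↦ Ψ (star (x j) * x k)) (fun j k ↦ H.mem _)
    (fun j k ↦ by rw [← H.map_star_of_mem' (hxx j k)]; simp)
    (fun d hd ↦ by
      have h := H.nonneg' i (∑ j, x j * ι (d j))
        (sum_mem fun j _ ↦ mul_mem (hx j) (H.incl_mem i _))
      convert h using 1
      rw [star_sum, Finset.sum_mul_sum, map_sum]
      refine Finset.sum_congr rfl fun j _ ↦ ?_
      rw [map_sum]
      refine Finset.sum_congr rfl fun k _ ↦ ?_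
      rw [← H.map_bimod' _ _ (star_mem (hd j)) (hd k), map_star, star_mul]
      simp only [mul_assoc])
  let v : Fin N → A := fun m ↦ ∑ j, ι (Q m j) * w j
  have hv : ∀ m, v m ∈ centeredSpan ι D Ψ S n (!i) := fun m ↦
    sum_mem fun j _ ↦ mul_mem_centeredSpan (hQD m j) (hw j)
  let c : Fin N → Fin N → A := fun j k ↦ star (x j) * x k - ι (Ψ (star (x j) * x k))
  have hc : ∀ j k, c j k ∈ S i := fun j k ↦ sub_mem (hxx j k) (H.incl_mem i _)
  have hc0 : ∀ j k, Ψ (c j k) = 0 := fun j k ↦ by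
    simp only [c, map_sub, H.map_incl' _ (H.mem _), sub_self]
  have hΦv : ∀ m, Φ (v m) = ∑ j, Q m j * Φ (w j) := fun m ↦ by
    simp only [v, map_sum, H.map_left]
  have e : star (∑ j, x j * w j) * ∑ j, x j * w j =
      ∑ m, star (v m) * v m + ∑ j, ∑ k, star (w j) * c j k * w k := by
    have e1 : ∑ m, star (v m) * v m =
        ∑ j, ∑ k, star (w j) * ι (Ψ (star (x j) * x k)) * w k := by
      simp only [v, star_sum, Finset.sum_mul_sum, star_mul]
      rw [Finset.sum_comm]
      refine Finset.sum_congr rfl fun j _ ↦ ?_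
      rw [Finset.sum_comm]
      refine Finset.sum_congr rfl fun k _ ↦ ?_
      rw [hQ, map_sum, Finset.mul_sum, Finset.sum_mul]
      simp only [map_mul, map_star, mul_assoc]
    rw [e1, star_sum, Finset.sum_mul_sum, ← Finset.sum_add_distrib]
    refine Finset.sum_congr rfl fun j _ ↦ ?_
    rw [← Finset.sum_add_distrib]
    refine Finset.sum_congr rfl fun k _ ↦ ?_
    simp only [c, star_mul, mul_sub, sub_mul, mul_assoc]
    abel
  have hΨ : Ψ (star (∑ j, x j * w j) * ∑ j, x j * w j) = ∑ m, Ψ (star (v m) * v m) := by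
    rw [e, map_add, map_sum, map_sum]
    simp only [map_sum, (H.map_star_mul_mul (hc _ _) (hc0 _ _) (hw _) (hw _)).1,
      Finset.sum_const_zero, add_zero]
  refine ⟨hΨ ▸ Finset.sum_nonneg fun m _ ↦ (ih _ (hv m)).1, ?_⟩
  have hΦ : Φ (star (∑ j, x j * w j) * ∑ j, x j * w j) = ∑ m, Φ (star (v m) * v m) +
      ∑ j, ∑ k, star (Φ (w j)) * Φ (c j k) * Φ (w k) := by
    rw [e, map_add, map_sum, map_sum]
    simp only [map_sum, (H.map_star_mul_mul (hc _ _) (hc0 _ _) (hw _) (hw _)).2]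
  have hy : Φ (star (∑ j, x j * ι (Φ (w j))) * ∑ j, x j * ι (Φ (w j))) =
      ∑ m, star (Φ (v m)) * Φ (v m) +
        ∑ j, ∑ k, star (Φ (w j)) * Φ (c j k) * Φ (w k) := by
    have e1 : ∑ m, star (Φ (v m)) * Φ (v m) =
        ∑ j, ∑ k, star (Φ (w j)) * Ψ (star (x j) * x k) * Φ (w k) := by
      simp only [hΦv, star_sum, Finset.sum_mul_sum, star_mul]
      rw [Finset.sum_comm]
      refine Finset.sum_congr rfl fun j _ ↦ ?_
      rw [Finset.sum_comm]
      refine Finset.sum_congr rfl fun k _ ↦ ?_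
      rw [hQ, Finset.mul_sum, Finset.sum_mul]
      simp only [mul_assoc]
    rw [e1, star_sum, Finset.sum_mul_sum, ← Finset.sum_add_distrib, map_sum]
    refine Finset.sum_congr rfl fun j _ ↦ ?_
    rw [← Finset.sum_add_distrib, map_sum]
    refine Finset.sum_congr rfl fun k _ ↦ ?_
    have e2 : star (x j * ι (Φ (w j))) * (x k * ι (Φ (w k))) =
        ι (star (Φ (w j))) * (star (x j) * x k) * ι (Φ (w k)) := by
      simp only [star_mul, map_star, mul_assoc]
    rw [e2, H.map_bimod]
    simp only [c, map_sub, H.map_incl, mul_sub, sub_mul]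
    abel
  rw [hΦ, hy]
  gcongr with m _
  exact (ih _ (hv m)).2

/-- Positivity of `Ψ` and the Schwarz inequality for `Φ` on centered spans. -/
theorem nonneg_of_mem_centeredSpan (H : CFreePositive ι D Φ Ψ S) (n : ℕ) :
    ∀ i, ∀ u ∈ centeredSpan ι D Ψ S n i,
      0 ≤ Ψ (star u * u) ∧ star (Φ u) * Φ u ≤ Φ (star u * u) := by
  have base : ∀ (d : B), d ∈ D → ∀ (w : A), Ψ w = 0 → Ψ (star w) = 0 →
      Φ (star w) = star (Φ w) →
      0 ≤ Ψ (star w * w) → star (Φ w) * Φ w ≤ Φ (star w * w) →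
      0 ≤ Ψ (star (ι d + w) * (ι d + w)) ∧
        star (Φ (ι d + w)) * Φ (ι d + w) ≤ Φ (star (ι d + w) * (ι d + w)) := by
    intro d hd w hw hw' hs hΨ hΦ
    rw [star_add, ← map_star, add_mul, mul_add, mul_add, ← map_mul]
    simp only [map_add, H.map_left, H.map_right, H.map_incl, hs, H.map_left' (star_mem hd),
      H.map_right' hd, hw, hw', H.map_incl' _ (mul_mem (star_mem hd) hd), mul_zero, zero_mul,
      add_zero, zero_add, star_add, add_mul, mul_add]
    refine ⟨add_nonneg (star_mul_self_nonneg d) hΨ, ?_⟩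
    rw [← sub_nonneg] at hΦ ⊢
    convert hΦ using 1
    abel
  induction n with
  | zero =>
    intro i u hu
    have hu' : u ∈ (Subalgebra.toSubmodule D.toSubalgebra).map ι.toAlgHom.toLinearMap := by
      refine Submodule.span_le.2 ?_ hu
      rintro _ ⟨d, hd, l, -, hn, rfl⟩
      obtain rfl : l = [] := List.length_eq_zero_iff.1 (Nat.le_zero.1 hn)
      exact ⟨d, hd, by simp⟩
    obtain ⟨d, hd, rfl⟩ := hu'
    simpa using base d hd 0 (by simp) (by simp) (by simp) (by simp) (by simp)
  | succ n ih =>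
    intro i u hu
    obtain ⟨d, hd, N, x, w, hx, hx0, hw, rfl⟩ := H.exists_of_mem_centeredSpan hu
    rw [Nat.add_sub_cancel] at hw
    have h1 : (1 : A) ∈ centeredSpan ι D Ψ S 0 (!i) :=
      Submodule.subset_span ⟨1, one_mem D, [], .nil _, le_rfl, by simp⟩
    have hl := fun j ↦ H.map_star_mul_mul (hx j) (hx0 j) h1 (hw j)
    have hr := fun j ↦ H.map_star_mul_mul (star_mem (hx j))
      (H.map_star_eq_zero i _ (hx j) (hx0 j)) (hw j) h1
    have hΦ1 : Φ 1 = 1 := by simpa using H.map_incl 1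
    simp only [star_one, one_mul, mul_one, hΦ1] at hl hr
    have hm := H.nonneg_and_le_sum_mul (ih (!i)) hx hw
    have hΦw : Φ (∑ j, x j * ι (Φ (w j))) = Φ (∑ j, x j * w j) := by
      simp only [map_sum, H.map_right, (hl _).2]
    refine base d hd _ ?_ ?_ ?_ hm.1 (le_trans ?_ hm.2)
    · simp only [map_sum, (hl _).1, Finset.sum_const_zero]
    · simp only [star_sum, star_mul, map_sum, (hr _).1, Finset.sum_const_zero]
    · simp only [star_sum, star_mul, map_sum, (hr _).2, (hl _).2, H.map_star_of_mem (hx _)]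
    · rw [← hΦw]
      exact H.schwarz (sum_mem fun j _ ↦ mul_mem (hx j) (H.incl_mem i _))

end CFreePositive

section centeredSpan

variable {A B : Type*} [CStarAlgebra B] [PartialOrder B]
  [Ring A] [Algebra ℂ A] [StarRing A] [StarModule ℂ A] {ι : B →⋆ₐ[ℂ] A}
  {D : StarSubalgebra ℂ B} {Φ Ψ : A →ₗ[ℂ] B} {S : Bool → StarSubalgebra ℂ A}

/-- The centered alternating words, with coefficients in `D`, span a left ideal of the algebra
generated by the `S i`. -/
theorem CFreePositive.mul_mem_iSup (H : CFreePositive ι D Φ Ψ S) {i : Bool} {x : A} (hx : x ∈ S i)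
    {u : A} (hu : u ∈ ⨆ p : ℕ × Bool, centeredSpan ι D Ψ S p.1 p.2) :
    x * u ∈ ⨆ p : ℕ × Bool, centeredSpan ι D Ψ S p.1 p.2 := by
  have step : ∀ y ∈ S i, ∀ l, CenteredWord Ψ S (!i) l →
      y * l.prod ∈ ⨆ p : ℕ × Bool, centeredSpan ι D Ψ S p.1 p.2 := by
    intro y hy l hl
    have hc := CenteredWord.cons (sub_mem hy (H.incl_mem i (Ψ y)))
      (by rw [map_sub, H.map_incl' _ (H.mem y), sub_self]) hl
    convert add_mem (hl.prod_mem_iSup (ι := ι) (H.mem y))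
      (hc.prod_mem_iSup (ι := ι) (one_mem D)) using 1
    simp [sub_mul]
  induction hu using Submodule.iSup_induction' with
  | zero => simp
  | add u v _ _ h₁ h₂ => rw [mul_add]; exact add_mem h₁ h₂
  | mem p u hu =>
    obtain ⟨n, k⟩ := p
    induction hu using Submodule.span_induction with
    | zero => simp
    | add u v _ _ h₁ h₂ => rw [mul_add]; exact add_mem h₁ h₂
    | smul c u _ h => rw [mul_smul_comm]; exact Submodule.smul_mem _ _ h
    | mem u hu =>
      obtain ⟨d, hd, l, hl, -, rfl⟩ := hu
      rw [← mul_assoc]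
      have hxd := mul_mem hx (H.incl_mem i d)
      cases hl with
      | nil => exact step _ hxd _ (.nil _)
      | @cons _ y l hy hy0 hl =>
        by_cases hk : k = i
        · subst hk
          rw [List.prod_cons, ← mul_assoc]
          exact step _ (mul_mem hxd hy) l hl
        · obtain rfl : k = !i := by revert hk; cases k <;> cases i <;> simp
          exact step _ hxd _ (.cons hy hy0 hl)

theorem CFreePositive.mem_iSup_of_mem_adjoin (H : CFreePositive ι D Φ Ψ S) {a : A}
    (ha : a ∈ StarAlgebra.adjoin ℂ ((S true : Set A) ∪ (S false : Set A))) :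
    ∃ n, ∃ u ∈ centeredSpan ι D Ψ S n true, ∃ v ∈ centeredSpan ι D Ψ S n false, a = u + v := by
  have hmul : ∀ t ∈ ⨆ p : ℕ × Bool, centeredSpan ι D Ψ S p.1 p.2,
      a * t ∈ ⨆ p : ℕ × Bool, centeredSpan ι D Ψ S p.1 p.2 := by
    have ha' : a ∈ Algebra.adjoin ℂ (((S true : Set A) ∪ (S false : Set A)) ∪
        star ((S true : Set A) ∪ (S false : Set A))) := ha
    induction ha' using Algebra.adjoin_induction with
    | mem x hx =>
      intro t ht
      rcases hx with (hx | hx) | (hx | hx)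
      · exact H.mul_mem_iSup hx ht
      · exact H.mul_mem_iSup hx ht
      · exact H.mul_mem_iSup (by simpa using star_mem hx) ht
      · exact H.mul_mem_iSup (by simpa using star_mem hx) ht
    | algebraMap r =>
      intro t ht
      rw [← Algebra.smul_def]
      exact Submodule.smul_mem _ _ ht
    | add x y hx hy h₁ h₂ =>
      intro t ht
      rw [add_mul]
      exact add_mem (h₁ hx t ht) (h₂ hy t ht)
    | mul x y hx hy h₁ h₂ =>
      intro t ht
      rw [mul_assoc]
      exact h₁ hx _ (h₂ hy t ht)
  have h1 := hmul 1 (by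
    simpa using (CenteredWord.nil (Ψ := Ψ) (S := S) true).prod_mem_iSup (ι := ι) (one_mem D))
  rw [mul_one] at h1
  clear hmul ha
  induction h1 using Submodule.iSup_induction' with
  | zero => exact ⟨0, 0, zero_mem _, 0, zero_mem _, by simp⟩
  | add x y _ _ h₁ h₂ =>
    obtain ⟨n, u, hu, v, hv, rfl⟩ := h₁
    obtain ⟨m, u', hu', v', hv', rfl⟩ := h₂
    exact ⟨max n m, u + u', add_mem (centeredSpan_mono (le_max_left n m) _ hu)
      (centeredSpan_mono (le_max_right n m) _ hu'), v + v',
      add_mem (centeredSpan_mono (le_max_left n m) _ hv)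
      (centeredSpan_mono (le_max_right n m) _ hv'), by abel⟩
  | mem p x hx =>
    obtain ⟨n, k⟩ := p
    cases k with
    | true => exact ⟨n, x, hx, 0, zero_mem _, by simp⟩
    | false => exact ⟨n, 0, zero_mem _, x, hx, by simp⟩

theorem CFreePositive.nonneg_of_mem_adjoin [StarOrderedRing B] (H : CFreePositive ι D Φ Ψ S)
    {a : A} (ha : a ∈ StarAlgebra.adjoin ℂ ((S true : Set A) ∪ (S false : Set A))) :
    0 ≤ Φ (star a * a) ∧ 0 ≤ Ψ (star a * a) := by
  obtain ⟨n, u, hu, v, hv, rfl⟩ := H.mem_iSup_of_mem_adjoin ha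
  obtain ⟨d, hd, N, x, w, hx, hx0, hw, rfl⟩ := H.exists_of_mem_centeredSpan hv
  replace hu : u + ι d ∈ centeredSpan ι D Ψ S n true := add_mem hu
    (Submodule.subset_span ⟨d, hd, [], .nil _, Nat.zero_le _, by simp⟩)
  have hv' : ∑ j, x j * w j ∈ centeredSpan ι D Ψ S n false := by
    simpa using sub_mem hv (Submodule.subset_span
      ⟨d, hd, [], .nil _, Nat.zero_le _, by simp⟩ : ι d ∈ centeredSpan ι D Ψ S n false)
  rw [← add_assoc]
  generalize u + ι d = u at hu
  have h1 : (1 : A) ∈ centeredSpan ι D Ψ S 0 true :=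
    Submodule.subset_span ⟨1, one_mem D, [], .nil _, le_rfl, by simp⟩
  have hΦ1 : Φ 1 = 1 := by simpa using H.map_incl 1
  have h0 := fun j ↦ H.map_star_mul_mul (hx j) (hx0 j) h1 (hw j)
  have hl := fun j ↦ H.map_star_mul_mul (hx j) (hx0 j) hu (hw j)
  have hr := fun j ↦ H.map_star_mul_mul (star_mem (hx j))
    (H.map_star_eq_zero _ _ (hx j) (hx0 j)) (hw j) hu
  simp only [star_one, one_mul, hΦ1] at h0
  have hpu := H.nonneg_of_mem_centeredSpan n _ _ hu
  have hpv := H.nonneg_of_mem_centeredSpan n _ _ hv'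
  have el : star u * ∑ j, x j * w j = ∑ j, star u * x j * w j := by
    simp only [Finset.mul_sum, mul_assoc]
  have er : star (∑ j, x j * w j) * u = ∑ j, star (w j) * star (x j) * u := by
    simp only [star_sum, star_mul, Finset.sum_mul]
  have hΦv : Φ (∑ j, x j * w j) = ∑ j, Φ (x j) * Φ (w j) := by
    simp only [map_sum, (h0 _).2]
  have hΦl : Φ (star u * ∑ j, x j * w j) = star (Φ u) * Φ (∑ j, x j * w j) := by
    rw [el, hΦv, Finset.mul_sum]
    simp only [map_sum, (hl _).2]
    simp only [mul_assoc]
  have hΦr : Φ (star (∑ j, x j * w j) * u) = star (Φ (∑ j, x j * w j)) * Φ u := by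
    rw [er, hΦv, star_sum, Finset.sum_mul]
    simp only [map_sum, (hr _).2, star_mul, H.map_star_of_mem (hx _)]
  have hΨl : Ψ (star u * ∑ j, x j * w j) = 0 := by
    rw [el]
    simp only [map_sum, (hl _).1, Finset.sum_const_zero]
  have hΨr : Ψ (star (∑ j, x j * w j) * u) = 0 := by
    rw [er]
    simp only [map_sum, (hr _).1, Finset.sum_const_zero]
  generalize ∑ j, x j * w j = v at *
  rw [star_add, add_mul, mul_add, mul_add]
  simp only [map_add, hΦl, hΦr, hΨl, hΨr]
  constructor
  · refine (star_mul_self_nonneg (Φ u + Φ v)).trans ?_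
    rw [star_add, add_mul, mul_add, mul_add]
    gcongr
    · exact hpu.2
    · exact hpv.2
  · rw [add_zero, zero_add]
    exact add_nonneg hpu.1 hpv.1

end centeredSpan

theorem stmt_1 {B A : Type*}
    [CStarAlgebra B] [PartialOrder B] [StarOrderedRing B]
    [Ring A] [Algebra ℂ A] [StarRing A] [StarModule ℂ A]
    -- `𝔅` sits inside `𝔄` as a unital *-subalgebra:
    (ι : B →⋆ₐ[ℂ] A) (hι : Function.Injective ι)
    -- `𝔇` is a C*-subalgebra of `𝔅` (it contains the unit since it is a subalgebra):
    (D : StarSubalgebra ℂ B) (hD : IsClosed (D : Set B))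
    -- `Φ : 𝔄 → 𝔅` is a conditional expectation:
    (Φ : A →ₗ[ℂ] B)
    (hΦbimod : ∀ (b b' : B) (a : A), Φ (ι b * a * ι b') = b * Φ a * b')
    (hΦid : ∀ b : B, Φ (ι b) = b)
    -- `Ψ : 𝔄 → 𝔇` is a conditional expectation:
    (Ψ : A →ₗ[ℂ] B) (hΨD : ∀ a : A, Ψ a ∈ D)
    (hΨbimod : ∀ d d' : B, d ∈ D → d' ∈ D → ∀ a : A, Ψ (ι d * a * ι d') = d * Ψ a * d')
    (hΨid : ∀ d : B, d ∈ D → Ψ (ι d) = d)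
    -- `𝔄₁, 𝔄₂` are *-subalgebras of `𝔄` containing `𝔅`:
    (S1 S2 : StarSubalgebra ℂ A) (hS1 : ∀ b : B, ι b ∈ S1) (hS2 : ∀ b : B, ι b ∈ S2)
    -- which are c-free with respect to `(Φ, Ψ)`:
    (hfree : IsCFreeFamily Φ Ψ (fun t : Bool => if t then S1 else S2))
    -- and on which `Φ` and `Ψ` restrict to positive maps:
    (hΦ1 : ∀ a ∈ S1, 0 ≤ Φ (star a * a)) (hΨ1 : ∀ a ∈ S1, 0 ≤ Ψ (star a * a))
    (hΦ2 : ∀ a ∈ S2, 0 ≤ Φ (star a * a)) (hΨ2 : ∀ a ∈ S2, 0 ≤ Ψ (star a * a)) :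
    ∀ a ∈ StarAlgebra.adjoin ℂ ((S1 : Set A) ∪ (S2 : Set A)),
      0 ≤ Φ (star a * a) ∧ 0 ≤ Ψ (star a * a) := by
  intro a ha
  have H : CFreePositive ι D Φ Ψ (fun t : Bool ↦ if t then S1 else S2) :=
    { isClosed := hD
      map_bimod := hΦbimod
      map_incl := hΦid
      mem := hΨD
      map_bimod' := hΨbimod
      map_incl' := hΨid
      incl_mem := fun i ↦ by cases i <;> simpa
      free := hfree
      nonneg := fun i ↦ by cases i <;> simpa
      nonneg' := fun i ↦ by cases i <;> simpa }
  exact H.nonneg_of_mem_adjoin (by simpa using ha)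
end
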